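/- Consider the group G = ℝ/ℤ acting on M = L²(ℝ/ℤ) by time translation (τ·f)(x) = f(x+τ). There exists no congruent section s : M/G → M, i.e., no map s with π∘s = Id satisfying ‖s(o) − s(o')‖ = d_Q(o, o') for all orbits o, o'. -/

import Mathlib

open MeasureTheory

/-- Translation of an `L²` function on the circle `ℝ/ℤ` by `τ`:
`(τ · f)(x) = f(x + τ)`. -/
noncomputable def circleTranslate (τ : AddCircle (1 : ℝ))
    (f : Lp ℝ 2 (volume : Measure (AddCircle (1 : ℝ)))) :
    Lp ℝ 2 (volume : Measure (AddCircle (1 : ℝ))) :=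
  Lp.compMeasurePreserving (fun x => x + τ)
    (measurePreserving_add_right volume τ) f

/-- The class in `L²` of the `n`-th cosine mode, translated by `τ`. -/
noncomputable def cosC (n : ℤ) (τ : AddCircle (1 : ℝ)) : C(AddCircle (1 : ℝ), ℝ) :=
  ⟨fun x => (fourier n (x + τ)).re, by fun_prop⟩

noncomputable def cosL (n : ℤ) (τ : AddCircle (1 : ℝ)) :
    Lp ℝ 2 (volume : Measure (AddCircle (1 : ℝ))) :=
  ContinuousMap.toLp (E := ℝ) 2 volume ℝ (cosC n τ)

lemma translate_cosL (n : ℤ) (τ σ : AddCircle (1 : ℝ)) :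
    circleTranslate τ (cosL n σ) = cosL n (τ + σ) := by
  have hq := measurePreserving_add_right (volume : Measure (AddCircle (1 : ℝ))) τ
  apply Lp.ext
  have h1 := Lp.coeFn_compMeasurePreserving (cosL n σ) hq
  have h2 : (cosL n σ : AddCircle (1 : ℝ) → ℝ) =ᵐ[volume] cosC n σ :=
    ContinuousMap.coeFn_toLp volume _
  have h3 : (cosL n (τ + σ) : AddCircle (1 : ℝ) → ℝ) =ᵐ[volume] cosC n (τ + σ) :=
    ContinuousMap.coeFn_toLp volume _
  have h4 := hq.quasiMeasurePreserving.ae_eq_comp h2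
  filter_upwards [h1, h3, h4] with x h1 h3 h4
  rw [h3]
  refine h1.trans (h4.trans ?_)
  simp [cosC, add_assoc]

lemma ctrans_add (τ : AddCircle (1 : ℝ))
    (f g : Lp ℝ 2 (volume : Measure (AddCircle (1 : ℝ)))) :
    circleTranslate τ (f + g) = circleTranslate τ f + circleTranslate τ g :=
  map_add _ f g

lemma translate_sub (τ : AddCircle (1 : ℝ))
    (f g : Lp ℝ 2 (volume : Measure (AddCircle (1 : ℝ)))) :
    circleTranslate τ (f - g) = circleTranslate τ f - circleTranslate τ g :=
  map_sub _ f g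

lemma norm_translate (τ : AddCircle (1 : ℝ))
    (f : Lp ℝ 2 (volume : Measure (AddCircle (1 : ℝ)))) :
    ‖circleTranslate τ f‖ = ‖f‖ :=
  Lp.norm_compMeasurePreserving f _

lemma cosL_eq {n m : ℤ} {τ σ : AddCircle (1 : ℝ)} (c : ℝ) (h : cosL n τ = c • cosL m σ)
    (x : AddCircle (1 : ℝ)) :
    (fourier n (x + τ)).re = c * (fourier m (x + σ)).re := by
  have : cosC n τ = c • cosC m σ := by
    apply ContinuousMap.toLp_injective (E := ℝ) (p := 2) (𝕜 := ℝ)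
      (volume : Measure (AddCircle (1 : ℝ)))
    rw [map_smul]
    exact h
  exact DFunLike.congr_fun this x

lemma fourier_one_half : fourier 1 (((1 / 2 : ℝ) : ℝ) : AddCircle (1 : ℝ)) = (-1 : ℂ) := by
  rw [fourier_coe_apply, ← Complex.exp_pi_mul_I]
  congr 1
  push_cast
  ring

lemma fourier_two_quarter : fourier 2 (((1 / 4 : ℝ) : ℝ) : AddCircle (1 : ℝ)) = (-1 : ℂ) := by
  rw [fourier_coe_apply, ← Complex.exp_pi_mul_I]
  congr 1
  push_cast
  ring

lemma fourier_add_pt (n : ℤ) (x y : AddCircle (1 : ℝ)) :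
    (fourier n (x + y) : ℂ) = fourier n x * fourier n y := by
  simp [fourier_apply, smul_add, AddCircle.toCircle_add]

lemma fourier_two_eq (x : AddCircle (1 : ℝ)) :
    (fourier 2 x : ℂ) = fourier 1 x * fourier 1 x := by
  rw [← fourier_add]; norm_num

lemma cosL_neg (n : ℤ) (e τ : AddCircle (1 : ℝ)) (he : (fourier n e : ℂ) = -1) :
    cosL n (e + τ) = - cosL n τ := by
  have : cosC n (e + τ) = - cosC n τ := by
    ext x
    simp only [cosC, ContinuousMap.coe_mk, ContinuousMap.neg_apply]
    rw [add_left_comm, fourier_add_pt n e, he]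
    simp
  rw [cosL, this, map_neg, cosL]

lemma cosL_two_half (τ : AddCircle (1 : ℝ)) :
    cosL 2 (((1 / 2 : ℝ) : AddCircle (1 : ℝ)) + τ) = cosL 2 τ := by
  have : cosC 2 (((1 / 2 : ℝ) : AddCircle (1 : ℝ)) + τ) = cosC 2 τ := by
    ext x
    simp only [cosC, ContinuousMap.coe_mk]
    rw [add_left_comm, fourier_add_pt 2, fourier_two_eq, fourier_one_half]
    simp
  rw [cosL, this, cosL]

lemma ortho (u v : Lp ℝ 2 (volume : Measure (AddCircle (1 : ℝ))))
    (hu : circleTranslate ((1 / 2 : ℝ) : AddCircle (1 : ℝ)) u = -u)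
    (hv : circleTranslate ((1 / 2 : ℝ) : AddCircle (1 : ℝ)) v = v) :
    ‖u - v‖ ^ 2 = ‖u‖ ^ 2 + ‖v‖ ^ 2 := by
  have h1 : ‖u - v‖ = ‖u + v‖ := by
    rw [← norm_translate ((1 / 2 : ℝ) : AddCircle (1 : ℝ)) (u - v), translate_sub, hu, hv,
      ← norm_neg]
    congr 1
    abel
  have h2 := parallelogram_law_with_norm ℝ u v
  rw [← h1] at h2
  nlinarith

lemma half_one (τ : AddCircle (1 : ℝ)) :
    circleTranslate ((1 / 2 : ℝ) : AddCircle (1 : ℝ)) (cosL 1 τ) = - cosL 1 τ := by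
  rw [translate_cosL, cosL_neg _ _ _ fourier_one_half]

lemma half_two (τ : AddCircle (1 : ℝ)) :
    circleTranslate ((1 / 2 : ℝ) : AddCircle (1 : ℝ)) (cosL 2 τ) = cosL 2 τ := by
  rw [translate_cosL, cosL_two_half]

lemma ctrans_zero (f : Lp ℝ 2 (volume : Measure (AddCircle (1 : ℝ)))) :
    circleTranslate 0 f = f := by
  have hq := measurePreserving_add_right (volume : Measure (AddCircle (1 : ℝ))) 0
  apply Lp.ext
  filter_upwards [Lp.coeFn_compMeasurePreserving f hq] with x h1
  refine h1.trans ?_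
  simp

/-- The representatives of the two modes are the modes of the representative of the sum. -/
lemma section_key (s : Lp ℝ 2 (volume : Measure (AddCircle (1 : ℝ))) →
        Lp ℝ 2 (volume : Measure (AddCircle (1 : ℝ))))
    (h1 : ∀ f, ∃ τ : AddCircle (1 : ℝ), s f = circleTranslate τ f)
    (h3 : ∀ f g, ‖s f - s g‖ = ⨅ τ : AddCircle (1 : ℝ), ‖f - circleTranslate τ g‖)
    (ρ : AddCircle (1 : ℝ)) :
    ∃ τ, s (cosL 1 0) = cosL 1 τ ∧ s (cosL 2 ρ) = cosL 2 (τ + ρ) := by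
  have hle : ∀ f g, ‖s f - s g‖ ≤ ‖f - g‖ := by
    intro f g
    rw [h3]
    refine (ciInf_le ⟨0, ?_⟩ 0).trans_eq (by rw [ctrans_zero])
    rintro _ ⟨τ, rfl⟩
    exact norm_nonneg _
  obtain ⟨τ, hτ⟩ := h1 (cosL 1 0 + cosL 2 ρ)
  obtain ⟨α, hα⟩ := h1 (cosL 1 0)
  obtain ⟨β, hβ⟩ := h1 (cosL 2 ρ)
  rw [ctrans_add, translate_cosL, translate_cosL, add_zero] at hτ
  rw [translate_cosL, add_zero] at hα
  rw [translate_cosL] at hβ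
  have ng : ∀ n (σ σ' : AddCircle (1 : ℝ)), ‖cosL n σ‖ = ‖cosL n σ'‖ := by
    intro n σ σ'
    rw [← norm_translate (σ' - σ) (cosL n σ), translate_cosL, sub_add_cancel]
  refine ⟨τ, ?_, ?_⟩
  · have hf := hle (cosL 1 0) (cosL 1 0 + cosL 2 ρ)
    rw [hα, hτ, sub_add_cancel_left, norm_neg, ng 2 ρ (τ + ρ), ← sub_sub] at hf
    have ho := ortho (cosL 1 α - cosL 1 τ) (cosL 2 (τ + ρ))
      (by rw [translate_sub, half_one, half_one]; abel) (half_two _)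
    have hz : ‖cosL 1 α - cosL 1 τ‖ ^ 2 ≤ 0 := by
      have := pow_le_pow_left₀ (norm_nonneg _) hf 2
      linarith
    rw [hα]
    exact sub_eq_zero.1 (norm_eq_zero.1 (pow_eq_zero_iff two_ne_zero |>.1
      (le_antisymm hz (sq_nonneg _))))
  · have hf := hle (cosL 2 ρ) (cosL 1 0 + cosL 2 ρ)
    rw [hβ, hτ, sub_add_cancel_right, norm_neg, ng 1 0 τ, norm_sub_rev, add_sub_assoc,
      ← sub_neg_eq_add, neg_sub] at hf
    have ho := ortho (cosL 1 τ) (cosL 2 (β + ρ) - cosL 2 (τ + ρ))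
      (half_one _) (by rw [translate_sub, half_two, half_two])
    have hz : ‖cosL 2 (β + ρ) - cosL 2 (τ + ρ)‖ ^ 2 ≤ 0 := by
      have := pow_le_pow_left₀ (norm_nonneg _) hf 2
      linarith
    rw [hβ]
    exact sub_eq_zero.1 (norm_eq_zero.1 (pow_eq_zero_iff two_ne_zero |>.1
      (le_antisymm hz (sq_nonneg _))))

/-- There is no congruent section for the action of `ℝ/ℤ` on `L²(ℝ/ℤ)` by time
translation: no choice of orbit representatives `s` (constant on orbits, with
`s f` in the orbit of `f`) satisfies
`‖s f - s g‖ = d_Q([f],[g]) = inf_τ ‖f - τ·g‖` for all `f, g`. -/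
theorem stmt2 :
    ¬ ∃ s : Lp ℝ 2 (volume : Measure (AddCircle (1 : ℝ))) →
        Lp ℝ 2 (volume : Measure (AddCircle (1 : ℝ))),
      (∀ f, ∃ τ : AddCircle (1 : ℝ), s f = circleTranslate τ f) ∧
      (∀ f g, (∃ τ : AddCircle (1 : ℝ), g = circleTranslate τ f) → s g = s f) ∧
      (∀ f g, ‖s f - s g‖ = ⨅ τ : AddCircle (1 : ℝ), ‖f - circleTranslate τ g‖) := by
  rintro ⟨s, h1, h2, h3⟩
  obtain ⟨τ, a1, a2⟩ := section_key s h1 h3 0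
  obtain ⟨σ, b1, b2⟩ := section_key s h1 h3 ((1 / 4 : ℝ) : AddCircle (1 : ℝ))
  have hs : s (cosL 2 ((1 / 4 : ℝ) : AddCircle (1 : ℝ))) = s (cosL 2 0) :=
    h2 _ _ ⟨((1 / 4 : ℝ) : AddCircle (1 : ℝ)), by rw [translate_cosL, add_zero]⟩
  rw [a2, b2, add_comm σ, cosL_neg _ _ _ fourier_two_quarter, add_zero] at hs
  rw [a1] at b1
  have e1 := cosL_eq (n := 1) (m := 1) (τ := τ) (σ := σ) 1 (by rw [one_smul, b1]) (-τ)
  have e2 := cosL_eq (n := 2) (m := 2) (τ := τ) (σ := σ) (-1)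
    (by rw [neg_one_smul]; exact hs.symm) (-τ)
  rw [neg_add_cancel] at e1 e2
  rw [fourier_two_eq (-τ + σ)] at e2
  simp only [fourier_eval_zero, Complex.one_re, Complex.mul_re] at e1 e2
  have hn : ‖(fourier 1 (-τ + σ) : ℂ)‖ = 1 := by
    rw [fourier_apply]; exact Circle.norm_coe _
  have hq := Complex.sq_norm (fourier 1 (-τ + σ) : ℂ)
  rw [hn, Complex.normSq_apply] at hq
  rw [one_mul] at e1
  rw [← e1] at e2 hq
  linarith
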